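/- Let f ∈ A₁(c) and set t = f′(c₁), s = f′(c₂). Then for every x ∈ [c₁,c₂]: f″(x) ≥ −2·((c₂−x)·t + (x−c₁)·s)/((c₂−c₁)·(1+c₁)) and f″(x) ≤ 2·((c₂−x)·t + (x−c₁)·s)/((c₂−c₁)·(1−c₂)). -/

import Mathlib

open Set Complex

noncomputable section

/-- The doubly-slit plane `ℂ(J)` for `J ⊆ ℝ`. -/
def CSlit (J : Set ℝ) : Set ℂ := {z : ℂ | z.im ≠ 0 ∨ z.re ∈ J}

/-- `ℂ₁ = ℂ((−1,1))`. -/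
def C1 : Set ℂ := CSlit (Set.Ioo (-1 : ℝ) 1)

/-- The class `A₁(c)` of normalized Herglotz functions. -/
structure MemA1 (c₁ c₂ c₃ c₄ : ℝ) (f : ℂ → ℂ) : Prop where
  holo : DifferentiableOn ℂ f C1
  maps : Set.MapsTo f C1 C1
  symm : ∀ z ∈ C1, f (starRingEnd ℂ z) = starRingEnd ℂ (f z)
  upper : ∀ z ∈ C1, 0 < z.im → 0 ≤ (f z).im
  lower : ∀ z ∈ C1, z.im < 0 → (f z).im ≤ 0
  val1 : f (c₁ : ℂ) = (c₃ : ℂ)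
  val2 : f (c₂ : ℂ) = (c₄ : ℂ)

/-!
The Schwarz–Pick inequality for `f` at the points `x + iε` and `y + iε` of the upper half-plane
becomes, as `ε → 0`, the two-point Löwner inequality `((u y - u x) / (y - x))² ≤ u' x * u' y` for
the restriction `u` of `f` to the real interval. In terms of `φ = 1 / √u'` it reads
`∫ φ⁻² ≤ (y - x) / (φ x * φ y)` over `[x, y]`, with equality for affine `φ`, and therefore forces
`φ` to be concave. Consequently `u' = φ⁻²` is convex, so that `u'` on `[c₁, c₂]` is at most the
chord between `t` and `s`; and the tangent of the positive concave function `φ` at `x` is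
nonnegative up to both end points `y` of the interval, which says `u'' x * (y - x) ≤ 2 * u' x`.
-/

open Filter Topology ComplexConjugate
open UpperHalfPlane (upperHalfPlaneSet)

section ConcaveInvSqrt

variable {s : Set ℝ} {u φ : ℝ → ℝ}

theorem exists_Ioo_forall_neg_of_nonneg_endpoints {g : ℝ → ℝ} {x y z : ℝ}
    (hg : ContinuousOn g (Icc x y)) (hz : z ∈ Icc x y) (hgx : 0 ≤ g x) (hgy : 0 ≤ g y)
    (hgz : g z < 0) :
    ∃ p ∈ Icc x y, ∃ q ∈ Icc x y, p < q ∧ 0 ≤ g p ∧ 0 ≤ g q ∧ ∀ t ∈ Ioo p q, g t < 0 := by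
  have hcompact : ∀ K ⊆ Icc x y, IsCompact K → IsCompact (K ∩ {t | 0 ≤ g t}) := fun K hK hKc ↦
    hKc.of_isClosed_subset
      ((hg.mono hK).preimage_isClosed_of_isClosed hKc.isClosed isClosed_Ici) inter_subset_left
  obtain ⟨p, ⟨hp, hgp⟩, hpmax⟩ :=
    (hcompact _ (Icc_subset_Icc_right hz.2) isCompact_Icc).exists_isGreatest
      ⟨x, left_mem_Icc.2 hz.1, hgx⟩
  obtain ⟨q, ⟨hq, hgq⟩, hqmin⟩ :=
    (hcompact _ (Icc_subset_Icc_left hz.1) isCompact_Icc).exists_isLeast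
      ⟨y, right_mem_Icc.2 hz.2, hgy⟩
  have hpz : p < z := hp.2.lt_of_ne fun h ↦ (h ▸ hgp).not_gt hgz
  have hzq : z < q := hq.1.lt_of_ne fun h ↦ (h ▸ hgq).not_gt hgz
  refine ⟨p, ⟨hp.1, hp.2.trans hz.2⟩, q, ⟨hz.1.trans hq.1, hq.2⟩, hpz.trans hzq, hgp, hgq,
    fun t ht ↦ lt_of_not_ge fun hgt ↦ ?_⟩
  rcases le_total t z with htz | hzt
  · exact (hpmax ⟨⟨hp.1.trans ht.1.le, htz⟩, hgt⟩).not_gt ht.1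
  · exact (hqmin ⟨⟨hzt, ht.2.le.trans hq.2⟩, hgt⟩).not_gt ht.2

theorem div_lt_sub_of_inv_sq_affine_lt {u' : ℝ → ℝ} {p q α β : ℝ} (hpq : p < q)
    (hpos : ∀ t ∈ Icc p q, 0 < α + β * t) (hu : ∀ t ∈ Icc p q, HasDerivAt u (u' t) t)
    (hlt : ∀ t ∈ Ioo p q, ((α + β * t) ^ 2)⁻¹ < u' t) :
    (q - p) / ((α + β * p) * (α + β * q)) < u q - u p := by
  have hp := hpos p (left_mem_Icc.2 hpq.le)
  have hprim : ∀ t ∈ Icc p q, HasDerivAt (fun t ↦ (t - p) / ((α + β * p) * (α + β * t)))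
      ((α + β * t) ^ 2)⁻¹ t := fun t ht ↦ by
    have ht' := hpos t ht
    have hden : HasDerivAt (fun t ↦ (α + β * p) * (α + β * t)) ((α + β * p) * β) t := by
      simpa using (((hasDerivAt_id t).const_mul β).const_add α).const_mul (α + β * p)
    refine (((hasDerivAt_id t).sub_const p).div hden (by positivity)).congr_deriv ?_
    simp only [id]
    field_simp
    ring
  have hdiff := fun t ht ↦ (hu t ht).sub (hprim t ht)
  have hmono : StrictMonoOn (u - fun t ↦ (t - p) / ((α + β * p) * (α + β * t))) (Icc p q) :=
    strictMonoOn_of_deriv_pos (convex_Icc p q)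
      (fun t ht ↦ (hdiff t ht).continuousAt.continuousWithinAt) fun t ht ↦ by
        rw [interior_Icc] at ht
        rw [(hdiff t (Ioo_subset_Icc_self ht)).deriv]
        exact sub_pos.2 (hlt t ht)
  have := hmono (left_mem_Icc.2 hpq.le) (right_mem_Icc.2 hpq.le) hpq
  simp only [Pi.sub_apply, sub_self, zero_div, sub_zero] at this
  linarith

theorem add_mul_pos_of_mem_Icc {α β x y t : ℝ} (hx : 0 < α + β * x) (hy : 0 < α + β * y)
    (ht : t ∈ Icc x y) : 0 < α + β * t := by
  rcases le_total 0 β with hβ | hβ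
  · linarith [mul_le_mul_of_nonneg_left ht.1 hβ]
  · linarith [mul_le_mul_of_nonpos_left ht.2 hβ]

-- Equality holds in `h` for affine `φ`, so `h` fails between consecutive points where the graph of
-- `φ` meets a chord with `φ` below the chord.
theorem concaveOn_of_sub_le_div_mul (hs : Convex ℝ s) (hφ : ContinuousOn φ s)
    (hpos : ∀ x ∈ s, 0 < φ x) (hu : ∀ x ∈ s, HasDerivAt u (φ x ^ 2)⁻¹ x)
    (h : ∀ x ∈ s, ∀ y ∈ s, x < y → u y - u x ≤ (y - x) / (φ x * φ y)) : ConcaveOn ℝ s φ := by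
  refine LinearOrder.concaveOn_of_lt hs fun x hx y hy hxy a b ha hb hab ↦ ?_
  simp only [smul_eq_mul]
  by_contra! hlt
  have hsub : Icc x y ⊆ s := hs.ordConnected.out hx hy
  obtain ⟨α, β, hαx, hαy⟩ : ∃ α β, α + β * x = φ x ∧ α + β * y = φ y := by
    have : y - x ≠ 0 := (sub_pos.2 hxy).ne'
    refine ⟨φ x - (φ y - φ x) / (y - x) * x, (φ y - φ x) / (y - x), by ring, ?_⟩
    field_simp
    ring
  have hchord : ∀ t ∈ Icc x y, 0 < α + β * t := fun t ↦
    add_mul_pos_of_mem_Icc (hαx ▸ hpos x hx) (hαy ▸ hpos y hy)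
  obtain ⟨p, hp, q, hq, hpq, hgp, hgq, hneg⟩ :=
    exists_Ioo_forall_neg_of_nonneg_endpoints (g := fun t ↦ φ t - (α + β * t))
      (z := a * x + b * y) ((hφ.mono hsub).sub (by fun_prop))
      (convex_Icc x y (left_mem_Icc.2 hxy.le) (right_mem_Icc.2 hxy.le) ha.le hb.le hab)
      (by simp [hαx]) (by simp [hαy])
      (by rw [← hαx, ← hαy] at hlt; linear_combination hlt + α * hab)
  have hpq_sub : Icc p q ⊆ Icc x y := Icc_subset_Icc hp.1 hq.2
  refine (h p (hsub hp) q (hsub hq) hpq).not_gt ?_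
  calc
    (q - p) / (φ p * φ q) ≤ (q - p) / ((α + β * p) * (α + β * q)) := by
      have := hchord p hp
      have := hchord q hq
      gcongr <;> linarith
    _ < u q - u p :=
      div_lt_sub_of_inv_sq_affine_lt hpq (fun t ht ↦ hchord t (hpq_sub ht))
        (fun t ht ↦ hu t (hsub (hpq_sub ht))) fun t ht ↦ by
          have := hpos t (hsub (hpq_sub (Ioo_subset_Icc_self ht)))
          have := hneg t ht
          gcongr
          linarith

theorem convexOn_inv_pow_of_concaveOn {E : Type*} [AddCommGroup E] [Module ℝ E] {s : Set E}
    {φ : E → ℝ} (hφ : ConcaveOn ℝ s φ) (hpos : ∀ x ∈ s, 0 < φ x) (n : ℕ) :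
    ConvexOn ℝ s fun x ↦ (φ x ^ n)⁻¹ := by
  refine ⟨hφ.1, fun x hx y hy a b ha hb hab ↦ ?_⟩
  have hcomb : 0 < a • φ x + b • φ y :=
    convex_Ioi (0 : ℝ) (hpos x hx) (hpos y hy) ha hb hab
  calc
    (φ (a • x + b • y) ^ n)⁻¹ ≤ ((a • φ x + b • φ y) ^ n)⁻¹ := by
      gcongr
      exact hφ.2 hx hy ha hb hab
    _ ≤ a • (φ x ^ n)⁻¹ + b • (φ y ^ n)⁻¹ := by
      simpa only [zpow_neg, zpow_natCast] using
        (convexOn_zpow (-n)).2 (hpos x hx) (hpos y hy) ha hb hab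

theorem sub_mul_le_of_convexOn {x y z : ℝ} (hφ : ConvexOn ℝ s φ) (hx : x ∈ s) (hy : y ∈ s)
    (hz : z ∈ Icc x y) : (y - x) * φ z ≤ (y - z) * φ x + (z - x) * φ y := by
  rcases hz.1.eq_or_lt with rfl | hxz
  · linarith
  · rcases hz.2.eq_or_lt with rfl | hzy
    · linarith
    · have := hφ.slope_mono_adjacent hx hy hxz hzy
      rw [div_le_div_iff₀ (sub_pos.2 hxz) (sub_pos.2 hzy)] at this
      linarith

theorem le_add_mul_sub_of_concaveOn {φ' x y : ℝ} (hφ : ConcaveOn ℝ s φ) (hx : x ∈ s) (hy : y ∈ s)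
    (hφ' : HasDerivAt φ φ' x) : φ y ≤ φ x + φ' * (y - x) := by
  rcases lt_trichotomy x y with hxy | rfl | hyx
  · have := hφ.slope_le_of_hasDerivAt hx hy hxy hφ'
    rw [slope_def_field, div_le_iff₀ (sub_pos.2 hxy)] at this
    linarith
  · simp
  · have := hφ.le_slope_of_hasDerivAt hy hx hyx hφ'
    rw [slope_def_field, le_div_iff₀ (sub_pos.2 hyx)] at this
    linarith

theorem add_mul_sub_nonneg_of_concaveOn {φ' x y : ℝ} (hφ : ConcaveOn ℝ s φ)
    (hnonneg : ∀ x ∈ s, 0 ≤ φ x) (hx : x ∈ s) (hy : y ∈ closure s) (hφ' : HasDerivAt φ φ' x) :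
    0 ≤ φ x + φ' * (y - x) :=
  closure_minimal (t := {y | 0 ≤ φ x + φ' * (y - x)})
    (fun y hy ↦ (hnonneg y hy).trans (le_add_mul_sub_of_concaveOn hφ hx hy hφ'))
    (isClosed_le (by fun_prop) (by fun_prop)) hy

end ConcaveInvSqrt

/-- The Löwner matrices of order two of `u`, with diagonal entries `u' x`, `u' y` and off-diagonal
entry the difference quotient of `u` between `x` and `y`, are positive semidefinite for
`x, y ∈ s`. The determinant condition is multiplied out, so that it is trivial for `x = y`. -/
structure IsLoewnerOn (u : ℝ → ℝ) (s : Set ℝ) : Prop where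
  deriv_nonneg : ∀ x ∈ s, 0 ≤ deriv u x
  sq_sub_le : ∀ x ∈ s, ∀ y ∈ s, (u y - u x) ^ 2 ≤ deriv u x * deriv u y * (y - x) ^ 2

namespace IsLoewnerOn

variable {s : Set ℝ} {u : ℝ → ℝ}

theorem deriv_pos_or_deriv_eq_zero (hu : IsLoewnerOn u s) (hs : IsOpen s) :
    (∀ x ∈ s, 0 < deriv u x) ∨ EqOn (deriv u) 0 s := by
  refine or_iff_not_imp_left.2 fun hpos ↦ ?_
  push Not at hpos
  obtain ⟨x, hx, hx_le⟩ := hpos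
  have hx_zero : deriv u x = 0 := hx_le.antisymm (hu.deriv_nonneg x hx)
  have hconst : EqOn u (fun _ ↦ u x) s := fun y hy ↦ by
    have := hu.sq_sub_le x hx y hy
    rw [hx_zero, zero_mul, zero_mul] at this
    exact sub_eq_zero.1 (pow_eq_zero_iff two_ne_zero |>.1 (this.antisymm (sq_nonneg _)))
  intro y hy
  simp [(hconst.eventuallyEq_of_mem (hs.mem_nhds hy)).deriv_eq]

theorem concaveOn_inv_sqrt_deriv (hu : IsLoewnerOn u s) (hs : Convex ℝ s)
    (hd : ∀ x ∈ s, DifferentiableAt ℝ u x) (hcont : ContinuousOn (deriv u) s)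
    (hpos : ∀ x ∈ s, 0 < deriv u x) : ConcaveOn ℝ s fun x ↦ (√(deriv u x))⁻¹ := by
  have hsqrt : ∀ x ∈ s, 0 < √(deriv u x) := fun x hx ↦ Real.sqrt_pos.2 (hpos x hx)
  refine concaveOn_of_sub_le_div_mul (u := u) hs (hcont.sqrt.inv₀ fun x hx ↦ (hsqrt x hx).ne')
    (fun x hx ↦ inv_pos.2 (hsqrt x hx)) (fun x hx ↦ ?_) fun x hx y hy hxy ↦ ?_
  · rw [inv_pow, inv_inv, Real.sq_sqrt (hpos x hx).le]
    exact (hd x hx).hasDerivAt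
  · rw [← mul_inv, div_inv_eq_mul]
    refine le_of_sq_le_sq ?_ (by have := sub_pos.2 hxy; positivity)
    rw [mul_pow, mul_pow, Real.sq_sqrt (hpos x hx).le, Real.sq_sqrt (hpos y hy).le, mul_comm]
    exact hu.sq_sub_le x hx y hy

theorem convexOn_deriv (hu : IsLoewnerOn u s) (hso : IsOpen s) (hsc : Convex ℝ s)
    (hd : ∀ x ∈ s, DifferentiableAt ℝ u x) (hcont : ContinuousOn (deriv u) s) :
    ConvexOn ℝ s (deriv u) := by
  rcases hu.deriv_pos_or_deriv_eq_zero hso with hpos | hzero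
  · have hsqrt : ∀ x ∈ s, 0 < (√(deriv u x))⁻¹ := fun x hx ↦
      inv_pos.2 (Real.sqrt_pos.2 (hpos x hx))
    refine (convexOn_inv_pow_of_concaveOn (hu.concaveOn_inv_sqrt_deriv hsc hd hcont hpos)
      hsqrt 2).congr fun x hx ↦ ?_
    simp [Real.sq_sqrt (hpos x hx).le]
  · exact (convexOn_const 0 hsc).congr hzero.symm

theorem deriv_deriv_mul_sub_le (hu : IsLoewnerOn u s) (hso : IsOpen s) (hsc : Convex ℝ s)
    (hd : ∀ x ∈ s, DifferentiableAt ℝ u x) (hd' : ∀ x ∈ s, DifferentiableAt ℝ (deriv u) x)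
    {x y : ℝ} (hx : x ∈ s) (hy : y ∈ closure s) :
    deriv (deriv u) x * (y - x) ≤ 2 * deriv u x := by
  rcases hu.deriv_pos_or_deriv_eq_zero hso with hpos | hzero
  · have hsqrt : 0 < √(deriv u x) := Real.sqrt_pos.2 (hpos x hx)
    have htangent := add_mul_sub_nonneg_of_concaveOn
      (hu.concaveOn_inv_sqrt_deriv hsc hd
        (fun x hx ↦ (hd' x hx).continuousAt.continuousWithinAt) hpos)
      (fun x _ ↦ by positivity) hx hy
      (((hd' x hx).hasDerivAt.sqrt (hpos x hx).ne').inv hsqrt.ne')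
    have hsq := Real.sq_sqrt (hpos x hx).le
    generalize √(deriv u x) = r at *
    rw [← hsq]
    have := mul_nonneg (show 0 ≤ 2 * r ^ 3 by positivity) htangent
    field_simp at this
    linarith
  · have hzero' := (hzero.eventuallyEq_of_mem (hso.mem_nhds hx)).deriv_eq
    simp [hzero', hzero hx]

end IsLoewnerOn

section SchwarzPick

variable {f : ℂ → ℂ} {z w ζ : ℂ}

theorem normSq_sub_conj (z w : ℂ) : normSq (z - conj w) = normSq (z - w) + 4 * z.im * w.im := by
  simp only [normSq_apply, sub_re, sub_im, conj_re, conj_im]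
  ring

theorem sub_conj_ne_zero (hz : 0 < z.im) (hw : 0 < w.im) : z - conj w ≠ 0 := fun h ↦ by
  have := congrArg im h
  simp only [sub_im, conj_im, zero_im] at this
  linarith

/-- The Cayley transform of the upper half-plane onto the unit disc that sends `w` to `0`. -/
def cayley (w z : ℂ) : ℂ := (z - w) / (z - conj w)

/-- The inverse of the Cayley transform `cayley w`. -/
def invCayley (w ζ : ℂ) : ℂ := (w - ζ * conj w) / (1 - ζ)

theorem normSq_cayley (w z : ℂ) :
    normSq (cayley w z) = normSq (z - w) / (normSq (z - w) + 4 * z.im * w.im) := by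
  rw [cayley, normSq_div, normSq_sub_conj]

theorem norm_cayley_lt_one (hw : 0 < w.im) (hz : 0 < z.im) : ‖cayley w z‖ < 1 := by
  have := normSq_nonneg (z - w)
  rw [← sq_lt_one_iff₀ (norm_nonneg _), Complex.sq_norm, normSq_cayley,
    div_lt_one (by positivity)]
  linarith [mul_pos hz hw]

theorem one_sub_ne_zero_of_norm_lt_one (hζ : ‖ζ‖ < 1) : 1 - ζ ≠ 0 := fun h ↦ by
  rw [← sub_eq_zero.1 h, norm_one] at hζ
  exact lt_irrefl 1 hζ

theorem im_invCayley (w ζ : ℂ) :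
    (invCayley w ζ).im = w.im * (1 - normSq ζ) / normSq (1 - ζ) := by
  rw [invCayley, Complex.div_im, ← sub_div]
  simp only [normSq_apply, sub_re, sub_im, mul_re, mul_im, conj_re, conj_im, one_re, one_im]
  ring

theorem im_invCayley_pos (hw : 0 < w.im) (hζ : ‖ζ‖ < 1) : 0 < (invCayley w ζ).im := by
  have hnorm : 0 < 1 - normSq ζ := by
    rw [normSq_eq_norm_sq, sub_pos]
    exact pow_lt_one₀ (norm_nonneg ζ) hζ two_ne_zero
  have := normSq_pos.2 (one_sub_ne_zero_of_norm_lt_one hζ)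
  rw [im_invCayley]
  positivity

theorem invCayley_cayley (hw : 0 < w.im) (hz : 0 < z.im) : invCayley w (cayley w z) = z := by
  have hzw := sub_conj_ne_zero hz hw
  have hww := sub_conj_ne_zero hw hw
  have hsub : 1 - cayley w z = (w - conj w) / (z - conj w) := by
    rw [cayley]
    field_simp
    ring
  rw [invCayley, hsub, cayley]
  field_simp
  ring

theorem differentiableAt_invCayley (hζ : ‖ζ‖ < 1) : DifferentiableAt ℂ (invCayley w) ζ := by
  have := one_sub_ne_zero_of_norm_lt_one hζ
  unfold invCayley
  fun_prop (disch := assumption)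

theorem norm_cayley_map_le (hf : DifferentiableOn ℂ f upperHalfPlaneSet)
    (hmaps : MapsTo f upperHalfPlaneSet upperHalfPlaneSet) (hz : 0 < z.im) (hw : 0 < w.im) :
    ‖cayley (f w) (f z)‖ ≤ ‖cayley w z‖ := by
  have hinv : MapsTo (invCayley w) (Metric.ball 0 1) upperHalfPlaneSet := fun ζ hζ ↦
    im_invCayley_pos hw (mem_ball_zero_iff.1 hζ)
  have hcomp : DifferentiableOn ℂ (fun ζ ↦ f (invCayley w ζ)) (Metric.ball 0 1) :=
    hf.comp (fun ζ hζ ↦ (differentiableAt_invCayley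
      (mem_ball_zero_iff.1 hζ)).differentiableWithinAt) hinv
  have hschwarz := norm_le_norm_of_mapsTo_ball (R := 1)
    (f := fun ζ ↦ cayley (f w) (f (invCayley w ζ)))
    ((hcomp.sub_const _).div (hcomp.sub_const _) fun ζ hζ ↦
      sub_conj_ne_zero (hmaps (hinv hζ)) (hmaps hw))
    (fun ζ hζ ↦ mem_closedBall_zero_iff.2
      (norm_cayley_lt_one (hmaps hw) (hmaps (hinv hζ))).le)
    (by simp [cayley, invCayley]) (norm_cayley_lt_one hw hz)
  simpa only [invCayley_cayley hw hz] using hschwarz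

theorem normSq_sub_mul_le_of_im_pos (hf : DifferentiableOn ℂ f upperHalfPlaneSet)
    (hmaps : MapsTo f upperHalfPlaneSet upperHalfPlaneSet) (hz : 0 < z.im) (hw : 0 < w.im) :
    normSq (f z - f w) * (z.im * w.im) ≤ normSq (z - w) * ((f z).im * (f w).im) := by
  have hfz : 0 < (f z).im := hmaps hz
  have hfw : 0 < (f w).im := hmaps hw
  have hle := pow_le_pow_left₀ (norm_nonneg _) (norm_cayley_map_le hf hmaps hz hw) 2
  have := normSq_nonneg (z - w)
  have := normSq_nonneg (f z - f w)
  rw [Complex.sq_norm, Complex.sq_norm, normSq_cayley, normSq_cayley,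
    div_le_div_iff₀ (by positivity) (by positivity)] at hle
  linarith

theorem normSq_sub_mul_le_of_im_nonneg (hf : DifferentiableOn ℂ f upperHalfPlaneSet)
    (him : ∀ z ∈ upperHalfPlaneSet, 0 ≤ (f z).im) (hz : 0 < z.im) (hw : 0 < w.im) :
    normSq (f z - f w) * (z.im * w.im) ≤ normSq (z - w) * ((f z).im * (f w).im) := by
  have hperturbed : ∀ ε : ℝ, 0 < ε → normSq (f z - f w) * (z.im * w.im) ≤
      normSq (z - w) * (((f z).im + ε) * ((f w).im + ε)) := fun ε hε ↦ by
    simpa using normSq_sub_mul_le_of_im_pos (hf.add_const (ε * I))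
      (fun z hz ↦ by simpa using add_pos_of_nonneg_of_pos (him z hz) hε) hz hw
  have hlim : Tendsto (fun ε : ℝ ↦ normSq (z - w) * (((f z).im + ε) * ((f w).im + ε)))
      (𝓝[>] 0) (𝓝 (normSq (z - w) * ((f z).im * (f w).im))) :=
    Continuous.tendsto' (by fun_prop) _ _ (by simp) |>.mono_left nhdsWithin_le_nhds
  exact ge_of_tendsto hlim (eventually_mem_nhdsWithin.mono hperturbed)

end SchwarzPick

theorem isOpen_CSlit {J : Set ℝ} (hJ : IsOpen J) : IsOpen (CSlit J) :=
  (isOpen_ne_fun continuous_im continuous_const).union (hJ.preimage continuous_re)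

theorem ofReal_mem_CSlit {J : Set ℝ} {x : ℝ} (hx : x ∈ J) : (x : ℂ) ∈ CSlit J :=
  Or.inr (by simpa using hx)

/-- Pick (or Herglotz, or Nevanlinna) functions that continue analytically across `J ⊆ ℝ`: they
are holomorphic on `CSlit J` and preserve the closed upper and the closed lower half-plane. -/
structure IsPickOn (f : ℂ → ℂ) (J : Set ℝ) : Prop where
  differentiableOn : DifferentiableOn ℂ f (CSlit J)
  im_nonneg : ∀ z : ℂ, 0 < z.im → 0 ≤ (f z).im
  im_nonpos : ∀ z : ℂ, z.im < 0 → (f z).im ≤ 0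

namespace IsPickOn

variable {f : ℂ → ℂ} {J : Set ℝ} {x : ℝ}

theorem analyticAt_ofReal (hf : IsPickOn f J) (hJ : IsOpen J) (hx : x ∈ J) : AnalyticAt ℂ f x :=
  hf.differentiableOn.analyticAt ((isOpen_CSlit hJ).mem_nhds (ofReal_mem_CSlit hx))

theorem hasDerivAt_re (hf : IsPickOn f J) (hJ : IsOpen J) (hx : x ∈ J) :
    HasDerivAt (fun y : ℝ ↦ (f y).re) (deriv f x).re x :=
  (hf.analyticAt_ofReal hJ hx).differentiableAt.hasDerivAt.real_of_complex

theorem hasDerivAt_vertical (hf : IsPickOn f J) (hJ : IsOpen J) (hx : x ∈ J) :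
    HasDerivAt (fun ε : ℝ ↦ f (x + ε * I)) (deriv f x * I) 0 := by
  have hline : HasDerivAt (fun ε : ℝ ↦ (x + ε * I : ℂ)) I 0 := by
    simpa using ((hasDerivAt_id (0 : ℝ)).ofReal_comp.mul_const I).const_add (x : ℂ)
  have hfx : HasDerivAt f (deriv f x) ((x : ℂ) + (0 : ℝ) * I) := by
    simpa using (hf.analyticAt_ofReal hJ hx).differentiableAt.hasDerivAt
  exact hfx.comp (0 : ℝ) hline

theorem tendsto_vertical (hf : IsPickOn f J) (hJ : IsOpen J) (hx : x ∈ J) :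
    Tendsto (fun ε : ℝ ↦ f (x + ε * I)) (𝓝 0) (𝓝 (f x)) := by
  simpa [ContinuousAt] using (hf.hasDerivAt_vertical hJ hx).continuousAt

theorem im_ofReal_eq_zero (hf : IsPickOn f J) (hJ : IsOpen J) (hx : x ∈ J) : (f x).im = 0 := by
  have hlim : Tendsto (fun ε : ℝ ↦ (f (x + ε * I)).im) (𝓝 0) (𝓝 (f x).im) :=
    (continuous_im.tendsto _).comp (hf.tendsto_vertical hJ hx)
  refine le_antisymm ?_ ?_
  · exact le_of_tendsto (hlim.mono_left nhdsWithin_le_nhds)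
      ((eventually_mem_nhdsWithin (s := Iio 0)).mono fun ε hε ↦ hf.im_nonpos _ (by simpa using hε))
  · exact ge_of_tendsto (hlim.mono_left nhdsWithin_le_nhds)
      ((eventually_mem_nhdsWithin (s := Ioi 0)).mono fun ε hε ↦ hf.im_nonneg _ (by simpa using hε))

theorem tendsto_im_vertical_div (hf : IsPickOn f J) (hJ : IsOpen J) (hx : x ∈ J) :
    Tendsto (fun ε : ℝ ↦ (f (x + ε * I)).im / ε) (𝓝[>] 0) (𝓝 (deriv f x).re) := by
  have him : HasDerivAt (fun ε : ℝ ↦ (f (x + ε * I)).im) (deriv f x).re 0 :=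
    (imCLM.hasFDerivAt.comp_hasDerivAt 0 (hf.hasDerivAt_vertical hJ hx)).congr_deriv (by simp)
  simpa [hf.im_ofReal_eq_zero hJ hx, div_eq_inv_mul] using him.tendsto_slope_zero_right

theorem sq_re_sub_le_of_pos (hf : IsPickOn f J) {ε : ℝ} (hε : 0 < ε) (x y : ℝ) :
    ((f (y + ε * I)).re - (f (x + ε * I)).re) ^ 2 ≤
      (f (x + ε * I)).im / ε * ((f (y + ε * I)).im / ε) * (y - x) ^ 2 := by
  have him : ∀ r : ℝ, (r + ε * I : ℂ).im = ε := fun r ↦ by simp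
  have hdist : normSq (y + ε * I - (x + ε * I)) = (y - x) ^ 2 := by
    rw [add_sub_add_right_eq_sub, ← ofReal_sub, normSq_ofReal, sq]
  have hpick := normSq_sub_mul_le_of_im_nonneg (z := y + ε * I) (w := x + ε * I)
    (hf.differentiableOn.mono fun z hz ↦ Or.inl (ne_of_gt hz)) hf.im_nonneg
    (by rwa [him]) (by rwa [him])
  rw [hdist, him, him] at hpick
  calc
    ((f (y + ε * I)).re - (f (x + ε * I)).re) ^ 2 ≤ normSq (f (y + ε * I) - f (x + ε * I)) := by
      simpa only [sub_re, sq] using re_sq_le_normSq (f (y + ε * I) - f (x + ε * I))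
    _ ≤ (y - x) ^ 2 * ((f (y + ε * I)).im * (f (x + ε * I)).im) / (ε * ε) :=
      (le_div_iff₀ (mul_pos hε hε)).2 hpick
    _ = (f (x + ε * I)).im / ε * ((f (y + ε * I)).im / ε) * (y - x) ^ 2 := by ring

theorem isLoewnerOn_re (hf : IsPickOn f J) (hJ : IsOpen J) :
    IsLoewnerOn (fun y : ℝ ↦ (f y).re) J where
  deriv_nonneg x hx := by
    rw [(hf.hasDerivAt_re hJ hx).deriv]
    exact ge_of_tendsto (hf.tendsto_im_vertical_div hJ hx)
      (eventually_mem_nhdsWithin.mono fun ε hε ↦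
        div_nonneg (hf.im_nonneg _ (by simpa using hε)) (le_of_lt hε))
  sq_sub_le x hx y hy := by
    rw [(hf.hasDerivAt_re hJ hx).deriv, (hf.hasDerivAt_re hJ hy).deriv]
    have hleft : Tendsto (fun ε : ℝ ↦ ((f (y + ε * I)).re - (f (x + ε * I)).re) ^ 2) (𝓝[>] 0)
        (𝓝 (((f y).re - (f x).re) ^ 2)) :=
      ((((continuous_re.tendsto _).comp (hf.tendsto_vertical hJ hy)).sub
        ((continuous_re.tendsto _).comp (hf.tendsto_vertical hJ hx))).pow 2).mono_left
          nhdsWithin_le_nhds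
    have hright := ((hf.tendsto_im_vertical_div hJ hx).mul
      (hf.tendsto_im_vertical_div hJ hy)).mul_const ((y - x) ^ 2)
    exact le_of_tendsto_of_tendsto hleft hright
      (eventually_mem_nhdsWithin.mono fun ε hε ↦ hf.sq_re_sub_le_of_pos hε x y)

theorem differentiableAt_re (hf : IsPickOn f J) (hJ : IsOpen J) (hx : x ∈ J) :
    DifferentiableAt ℝ (fun y : ℝ ↦ (f y).re) x :=
  (hf.hasDerivAt_re hJ hx).differentiableAt

theorem differentiableAt_deriv_re (hf : IsPickOn f J) (hJ : IsOpen J) (hx : x ∈ J) :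
    DifferentiableAt ℝ (deriv fun y : ℝ ↦ (f y).re) x :=
  (hf.analyticAt_ofReal hJ hx).re_ofReal.deriv.differentiableAt

theorem convexOn_deriv_re (hf : IsPickOn f J) (hJ : IsOpen J) (hJc : Convex ℝ J) :
    ConvexOn ℝ J (deriv fun y : ℝ ↦ (f y).re) :=
  (hf.isLoewnerOn_re hJ).convexOn_deriv hJ hJc (fun _ ↦ hf.differentiableAt_re hJ)
    fun _ hx ↦ (hf.differentiableAt_deriv_re hJ hx).continuousAt.continuousWithinAt

theorem deriv_deriv_re_mul_sub_le (hf : IsPickOn f J) (hJ : IsOpen J) (hJc : Convex ℝ J)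
    {y : ℝ} (hx : x ∈ J) (hy : y ∈ closure J) :
    deriv (deriv fun y : ℝ ↦ (f y).re) x * (y - x) ≤ 2 * deriv (fun y : ℝ ↦ (f y).re) x :=
  (hf.isLoewnerOn_re hJ).deriv_deriv_mul_sub_le hJ hJc (fun _ ↦ hf.differentiableAt_re hJ)
    (fun _ ↦ hf.differentiableAt_deriv_re hJ) hx hy

end IsPickOn

theorem stmt11_general {a b c₁ c₂ : ℝ} (ha : a < c₁) (h12 : c₁ < c₂) (hb : c₂ < b)
    {f : ℂ → ℂ} (hf : IsPickOn f (Ioo a b)) {t s : ℝ}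
    (ht : t = deriv (fun y : ℝ => (f y).re) c₁) (hs : s = deriv (fun y : ℝ => (f y).re) c₂) :
    ∀ x ∈ Icc c₁ c₂,
      -2 * ((c₂ - x) * t + (x - c₁) * s) / ((c₂ - c₁) * (c₁ - a)) ≤
          deriv (deriv (fun y : ℝ => (f y).re)) x ∧
        deriv (deriv (fun y : ℝ => (f y).re)) x ≤
          2 * ((c₂ - x) * t + (x - c₁) * s) / ((c₂ - c₁) * (b - c₂)) := by
  subst ht hs
  rintro x ⟨hx₁, hx₂⟩
  have hc := sub_pos.2 h12
  have hchord := sub_mul_le_of_convexOn (hf.convexOn_deriv_re isOpen_Ioo (convex_Ioo a b))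
    ⟨ha, h12.trans hb⟩ ⟨ha.trans h12, hb⟩ ⟨hx₁, hx₂⟩
  have htangent : ∀ y ∈ Icc a b, deriv (deriv fun y : ℝ ↦ (f y).re) x * (y - x) ≤
      2 * deriv (fun y : ℝ ↦ (f y).re) x := fun y hy ↦
    hf.deriv_deriv_re_mul_sub_le isOpen_Ioo (convex_Ioo a b) ⟨ha.trans_le hx₁, hx₂.trans_lt hb⟩
      (by rwa [closure_Ioo (ha.trans (h12.trans hb)).ne])
  constructor
  · have hleft := htangent (x + (a - c₁)) ⟨by linarith, by linarith⟩
    rw [div_le_iff₀ (mul_pos hc (sub_pos.2 ha))]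
    linarith [mul_le_mul_of_nonneg_left hleft hc.le]
  · have hright := htangent (x + (b - c₂)) ⟨by linarith, by linarith⟩
    rw [le_div_iff₀ (mul_pos hc (sub_pos.2 hb))]
    linarith [mul_le_mul_of_nonneg_left hright hc.le]

theorem stmt11 (c₁ c₂ c₃ c₄ : ℝ)
    (h1 : -1 < c₁) (h12 : c₁ < c₂) (h2 : c₂ < 1)
    (h3 : -1 < c₃) (h34 : c₃ < c₄) (h4 : c₄ < 1)
    (f : ℂ → ℂ) (hf : MemA1 c₁ c₂ c₃ c₄ f)
    (t s : ℝ)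
    (ht : t = deriv (fun y : ℝ => (f y).re) c₁)
    (hs : s = deriv (fun y : ℝ => (f y).re) c₂) :
    ∀ x ∈ Set.Icc c₁ c₂,
      -2 * ((c₂ - x) * t + (x - c₁) * s) / ((c₂ - c₁) * (1 + c₁)) ≤
          deriv (deriv (fun y : ℝ => (f y).re)) x ∧
        deriv (deriv (fun y : ℝ => (f y).re)) x ≤
          2 * ((c₂ - x) * t + (x - c₁) * s) / ((c₂ - c₁) * (1 - c₂)) := by
  have hpick : IsPickOn f (Ioo (-1) 1) :=
    ⟨hf.holo, fun z hz ↦ hf.upper z (Or.inl hz.ne') hz, fun z hz ↦ hf.lower z (Or.inl hz.ne) hz⟩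
  simpa only [sub_neg_eq_add, add_comm c₁] using stmt11_general h1 h12 h2 hpick ht hs
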